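/- For all quaternions z, w with ‖z‖·‖w‖ < 1, the quaternion 1 − 2 z Re(w) + z² ‖w‖² is invertible and ∑_{n=0}^∞ zⁿ (conj w)ⁿ = (1 − 2 z Re(w) + z² ‖w‖²)⁻¹ (1 − z w). (This is the closed form of the reproducing kernel q ↦ (1 − q·conj(w))^{−∗} of the quaternionic Hardy space H²(𝔹), evaluated at q = z.) -/

import Mathlib

local notation "ℍ" => Quaternion ℝ

/-!
The sum `S = ∑ zⁿ w̄ⁿ` satisfies `S - z S w̄ = 1`. Subtracting `z (S - z S w̄) w = z w` from this
identity leaves `S - z S (w̄ + w) + z² S (w̄ w) = 1 - z w`. As `w̄ + w = 2 Re w` and `w̄ w = ‖w‖²`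
are real, they commute with `S`, so that `S` factors out on the right; the remaining left factor
cannot vanish, because `‖z w‖ < 1` gives `1 - z w ≠ 0`.
-/

theorem summable_pow_mul_pow {R : Type*} [NormedRing R] [CompleteSpace R] {a b : R}
    (hab : ‖a‖ * ‖b‖ < 1) : Summable fun n : ℕ ↦ a ^ n * b ^ n := by
  have hgeom : Summable fun n : ℕ ↦ (‖a‖ * ‖b‖) ^ n :=
    summable_geometric_of_lt_one (by positivity) hab
  refine hgeom.of_norm_bounded_eventually_nat ?_
  -- In a normed ring without `‖1‖ = 1` the bound fails at `n = 0`.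
  filter_upwards [Filter.eventually_gt_atTop 0] with n hn
  calc ‖a ^ n * b ^ n‖ ≤ ‖a ^ n‖ * ‖b ^ n‖ := norm_mul_le _ _
    _ ≤ ‖a‖ ^ n * ‖b‖ ^ n := by gcongr <;> exact norm_pow_le' _ hn
    _ = (‖a‖ * ‖b‖) ^ n := (mul_pow _ _ n).symm

theorem tsum_pow_mul_pow_sub_mul_mul {R : Type*} [Ring R] [TopologicalSpace R]
    [IsTopologicalRing R] [T2Space R] {a b : R} (hab : Summable fun n : ℕ ↦ a ^ n * b ^ n) :
    (∑' n : ℕ, a ^ n * b ^ n) - a * (∑' n : ℕ, a ^ n * b ^ n) * b = 1 := by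
  have hshift : ∑' n : ℕ, a ^ (n + 1) * b ^ (n + 1) = a * (∑' n : ℕ, a ^ n * b ^ n) * b := by
    rw [← hab.tsum_mul_left, ← (hab.mul_left a).tsum_mul_right]
    simp only [pow_succ' a, pow_succ b, mul_assoc]
  rw [sub_eq_iff_eq_add, ← hshift, hab.tsum_eq_zero_add, pow_zero, pow_zero, mul_one]

theorem one_sub_add_mul_eq_one_sub_mul_of_commute {R : Type*} [Ring R] {z v w s : R}
    (hs : s - z * s * v = 1) (hadd : Commute (v + w) s) (hmul : Commute (v * w) s) :
    (1 - z * (v + w) + z ^ 2 * (v * w)) * s = 1 - z * w := by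
  calc (1 - z * (v + w) + z ^ 2 * (v * w)) * s
      = s - z * ((v + w) * s) + z ^ 2 * (v * w * s) := by noncomm_ring
    _ = s - z * (s * (v + w)) + z ^ 2 * (s * (v * w)) := by rw [hadd.eq, hmul.eq]
    _ = (s - z * s * v) - z * (s - z * s * v) * w := by noncomm_ring
    _ = 1 - z * w := by rw [hs, mul_one]

theorem commute_star_add_self (w q : ℍ) : Commute (star w + w) q := by
  rw [Quaternion.star_add_self']
  exact Quaternion.coe_commute _ q

theorem commute_star_mul_self (w q : ℍ) : Commute (star w * w) q := by
  rw [Quaternion.star_mul_self]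
  exact Quaternion.coe_commute _ q

theorem one_sub_two_mul_re_add_sq_mul_norm_sq (z w : ℍ) :
    1 - 2 * z * (w.re : ℍ) + z ^ 2 * ((‖w‖ ^ 2 : ℝ) : ℍ) =
      1 - z * (star w + w) + z ^ 2 * (star w * w) := by
  rw [Quaternion.star_add_self, Quaternion.star_mul_self, Quaternion.normSq_eq_norm_mul_self,
    ← sq, (Commute.ofNat_left 2 z).eq, mul_assoc]

/-- Closed form of the reproducing kernel of the quaternionic Hardy space `H²(𝔹)`:
for quaternions `z, w` with `‖z‖·‖w‖ < 1`, the quaternion `1 − 2 z Re(w) + z² ‖w‖²`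
is invertible and `∑_{n} zⁿ (conj w)ⁿ = (1 − 2 z Re(w) + z² ‖w‖²)⁻¹ (1 − z w)`. -/
theorem hardy_kernel_closed_form (z w : ℍ) (h : ‖z‖ * ‖w‖ < 1) :
    (1 - 2 * z * (w.re : ℍ) + z ^ 2 * ((‖w‖ ^ 2 : ℝ) : ℍ)) ≠ 0 ∧
    (∑' n : ℕ, z ^ n * (star w) ^ n) =
      (1 - 2 * z * (w.re : ℍ) + z ^ 2 * ((‖w‖ ^ 2 : ℝ) : ℍ))⁻¹ * (1 - z * w) := by
  rw [one_sub_two_mul_re_add_sq_mul_norm_sq]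
  have hsum : Summable fun n : ℕ ↦ z ^ n * star w ^ n :=
    summable_pow_mul_pow (by rwa [Quaternion.norm_star])
  have hmul : (1 - z * (star w + w) + z ^ 2 * (star w * w)) * (∑' n : ℕ, z ^ n * star w ^ n) =
      1 - z * w :=
    one_sub_add_mul_eq_one_sub_mul_of_commute (tsum_pow_mul_pow_sub_mul_mul hsum)
      (commute_star_add_self w _) (commute_star_mul_self w _)
  have hzw : 1 - z * w ≠ 0 := (isUnit_one_sub_of_norm_lt_one (by rwa [norm_mul])).ne_zero
  have hden : 1 - z * (star w + w) + z ^ 2 * (star w * w) ≠ 0 :=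
    left_ne_zero_of_mul (hmul.trans_ne hzw)
  exact ⟨hden, (eq_inv_mul_iff_mul_eq₀ hden).2 hmul⟩
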